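/- arXiv:math/0502428 — 8 statements merged into one kernel-verified Lean document; each statement's English description precedes it below -/
import Mathlib

section
/- For all real numbers x, y, u with x > 0, 0 ≤ y < π/3, and 0 < u < 1, one has sinh(x)·cosh(u·x)·sin(y)·sin(u·y) + cosh(x)·sinh(u·x)·cos(y)·cos(u·y) − sinh(u·x)·cosh(u·x) > 0. -/
theorem sinh_mul_le_aux (x u : ℝ) (hx : 0 < x) (hu0 : 0 < u) (hu1 : u < 1) :
    Real.sinh (u * x) ≤ u * Real.sinh x := by
  have hd : ∀ t : ℝ, HasDerivAt (fun t => u * Real.sinh t - Real.sinh (u * t))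
      (u * Real.cosh t - Real.cosh (u * t) * (u * 1)) t := fun t =>
    ((Real.hasDerivAt_sinh t).const_mul u).sub (((hasDerivAt_id t).const_mul u).sinh)
  have hm : MonotoneOn (fun t => u * Real.sinh t - Real.sinh (u * t)) (Set.Ici 0) := by
    apply monotoneOn_of_deriv_nonneg (convex_Ici 0)
    · exact fun t _ => (hd t).continuousAt.continuousWithinAt
    · exact fun t _ => (hd t).differentiableAt.differentiableWithinAt
    · intro t ht
      rw [interior_Ici, Set.mem_Ioi] at ht
      rw [(hd t).deriv]
      have h : Real.cosh (u * t) ≤ Real.cosh t := by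
        rw [Real.cosh_le_cosh, abs_of_pos (mul_pos hu0 ht), abs_of_pos ht]
        nlinarith
      nlinarith
  have h := hm (Set.mem_Ici.2 le_rfl) (Set.mem_Ici.2 hx.le) hx.le
  simp at h
  exact h

theorem phi_one_pos (x y u : ℝ) (hx : 0 < x) (hy0 : 0 ≤ y) (hy : y < Real.pi / 3)
    (hu0 : 0 < u) (hu1 : u < 1) :
    Real.sinh x * Real.cosh (u * x) * Real.sin y * Real.sin (u * y) +
      Real.cosh x * Real.sinh (u * x) * Real.cos y * Real.cos (u * y) -
      Real.sinh (u * x) * Real.cosh (u * x) > 0 := by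
  have hpi := Real.pi_pos
  have hsh := sinh_mul_le_aux x u hx hu0 hu1
  have hux : 0 < u * x := mul_pos hu0 hx
  have hS : 0 < Real.sinh (u * x) := Real.sinh_pos_iff.2 hux
  have hSx : 0 < Real.sinh x := Real.sinh_pos_iff.2 hx
  have hC : 0 < Real.cosh (u * x) := Real.cosh_pos _
  have hCC : Real.cosh (u * x) < Real.cosh x := by
    rw [Real.cosh_lt_cosh, abs_of_pos hux, abs_of_pos hx]
    nlinarith
  have huy : u * y ≤ y := by nlinarith
  have huy0 : 0 ≤ u * y := by positivity
  have hs0 : 0 ≤ Real.sin y := Real.sin_nonneg_of_nonneg_of_le_pi hy0 (by linarith)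
  have hc0 : 0 < Real.cos y := Real.cos_pos_of_mem_Ioo ⟨by linarith, by linarith⟩
  have hcc : Real.cos y ≤ Real.cos (u * y) :=
    Real.cos_le_cos_of_nonneg_of_le_pi huy0 (by linarith) huy
  have hss : u * Real.sin y ≤ Real.sin (u * y) := by
    have h := strictConcaveOn_sin_Icc.concaveOn.2 (x := y) ⟨hy0, by linarith⟩
      (y := 0) ⟨le_rfl, hpi.le⟩ hu0.le (sub_nonneg.2 hu1.le) (by ring)
    simpa using h
  have h1 : Real.sinh (u * x) * Real.cosh (u * x) * Real.sin y ^ 2 ≤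
      Real.sinh x * Real.cosh (u * x) * Real.sin y * Real.sin (u * y) :=
    calc Real.sinh (u * x) * Real.cosh (u * x) * Real.sin y ^ 2
        ≤ (u * Real.sinh x) * Real.cosh (u * x) * Real.sin y ^ 2 := by gcongr
      _ = Real.sinh x * Real.cosh (u * x) * Real.sin y * (u * Real.sin y) := by ring
      _ ≤ _ := by gcongr
  have h2 : Real.sinh (u * x) * Real.cosh (u * x) * Real.cos y ^ 2 <
      Real.cosh x * Real.sinh (u * x) * Real.cos y * Real.cos (u * y) :=
    calc Real.sinh (u * x) * Real.cosh (u * x) * Real.cos y ^ 2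
        = Real.cosh (u * x) * Real.sinh (u * x) * Real.cos y * Real.cos y := by ring
      _ < Real.cosh x * Real.sinh (u * x) * Real.cos y * Real.cos y := by gcongr
      _ ≤ _ := by gcongr
  have h3 : Real.sinh (u * x) * Real.cosh (u * x) * Real.sin y ^ 2 +
      Real.sinh (u * x) * Real.cosh (u * x) * Real.cos y ^ 2 =
      Real.sinh (u * x) * Real.cosh (u * x) := by
    rw [← mul_add, Real.sin_sq_add_cos_sq, mul_one]
  linarith
end

section
/- For all real numbers x, y, u with x ≥ 0, 0 < y < π/3, and 0 < u < 1, one has sin(u·y)·cos(u·y) + sinh(x)·sinh(u·x)·sin(y)·cos(u·y) − cosh(x)·cosh(u·x)·cos(y)·sin(u·y) > 0. -/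
theorem aux_sinh_convex : ConvexOn ℝ (Set.Ici (0 : ℝ)) Real.sinh := by
  apply MonotoneOn.convexOn_of_deriv (convex_Ici 0) Real.continuous_sinh.continuousOn
    Real.differentiable_sinh.differentiableOn
  rw [Real.deriv_sinh]
  exact Real.cosh_strictMonoOn.monotoneOn.mono interior_subset

theorem aux_sinh_le (r t : ℝ) (hr0 : 0 ≤ r) (hr1 : r ≤ 1) (ht : 0 ≤ t) :
    Real.sinh (r * t) ≤ r * Real.sinh t := by
  have h := aux_sinh_convex.2 (x := t) ht (y := 0) (Set.mem_Ici.2 le_rfl) hr0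
    (sub_nonneg.2 hr1) (by ring)
  simpa using h

theorem aux_le_sin (r t : ℝ) (hr0 : 0 ≤ r) (hr1 : r ≤ 1) (ht : 0 ≤ t) (ht' : t ≤ Real.pi) :
    r * Real.sin t ≤ Real.sin (r * t) := by
  have h := strictConcaveOn_sin_Icc.concaveOn.2 (x := t) ⟨ht, ht'⟩ (y := 0)
    ⟨le_rfl, Real.pi_pos.le⟩ hr0 (sub_nonneg.2 hr1) (by ring)
  simpa using h

theorem aux_cosh (t : ℝ) : Real.cosh t - 1 = 2 * Real.sinh (t / 2) ^ 2 := by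
  have h := Real.cosh_two_mul (t / 2)
  rw [Real.cosh_sq, mul_div_cancel₀ t (two_ne_zero)] at h
  linarith

theorem phi_two_pos (x y u : ℝ) (hx : 0 ≤ x) (hy0 : 0 < y) (hy : y < Real.pi / 3)
    (hu0 : 0 < u) (hu1 : u < 1) :
    Real.sin (u * y) * Real.cos (u * y) +
      Real.sinh x * Real.sinh (u * x) * Real.sin y * Real.cos (u * y) -
      Real.cosh x * Real.cosh (u * x) * Real.cos y * Real.sin (u * y) > 0 := by
  have hpi := Real.pi_pos
  have huy : u * y < y := by nlinarith
  have huy0 : 0 < u * y := by positivity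
  have hux0 : 0 ≤ u * x := by positivity
  obtain ⟨r, hr⟩ : ∃ r, r = (1 - u) / (1 + u) := ⟨_, rfl⟩
  have hra : r * (1 + u) = 1 - u := by rw [hr]; field_simp
  have hr0 : 0 ≤ r := by rw [hr]; apply div_nonneg <;> linarith
  have hr1 : r ≤ 1 := by rw [hr, div_le_one (by linarith)]; linarith
  have hA := aux_le_sin r (y + u * y) hr0 hr1 (by linarith) (by linarith)
  rw [show r * (y + u * y) = y - u * y by linear_combination y * hra] at hA
  have hS := aux_sinh_le r ((x + u * x) / 2) hr0 hr1 (by linarith)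
  rw [show r * ((x + u * x) / 2) = (x - u * x) / 2 by linear_combination x / 2 * hra] at hS
  have hS0 : 0 ≤ Real.sinh ((x - u * x) / 2) := by
    rw [Real.sinh_nonneg_iff]; nlinarith
  have hB : 0 ≤ Real.sin (y + u * y) :=
    Real.sin_nonneg_of_nonneg_of_le_pi (by linarith) (by linarith)
  have hP := aux_cosh (x - u * x)
  have hQ := aux_cosh (x + u * x)
  have hPQ : Real.cosh (x - u * x) - 1 ≤ r ^ 2 * (Real.cosh (x + u * x) - 1) := by
    rw [hP, hQ]
    have := pow_le_pow_left₀ hS0 hS 2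
    rw [mul_pow] at this
    linarith
  have hQ0 : 0 ≤ Real.cosh (x + u * x) - 1 := by rw [hQ]; positivity
  have key : (Real.cosh (x - u * x) - 1) * Real.sin (y + u * y) ≤
      (Real.cosh (x + u * x) - 1) * Real.sin (y - u * y) := by
    have hA0 : 0 ≤ Real.sin (y - u * y) := le_trans (by positivity) hA
    calc _ ≤ r ^ 2 * (Real.cosh (x + u * x) - 1) * Real.sin (y + u * y) := by gcongr
      _ = r * (Real.cosh (x + u * x) - 1) * (r * Real.sin (y + u * y)) := by ring
      _ ≤ 1 * (Real.cosh (x + u * x) - 1) * Real.sin (y - u * y) := by gcongr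
      _ = _ := by ring
  have hs : 0 < Real.sin (u * y) := Real.sin_pos_of_pos_of_lt_pi huy0 (by linarith)
  have hc : Real.cos y < Real.cos (u * y) :=
    Real.cos_lt_cos_of_nonneg_of_le_pi huy0.le (by linarith) huy
  have h0 := mul_pos hs (sub_pos.2 hc)
  rw [Real.cosh_sub, Real.cosh_add, Real.sin_add, Real.sin_sub] at key
  linarith
end

section
/- For all real numbers y and u with 0 < y < π/3 and 0 < u < 1, one has u·sin(y)·cos(u·y) − sin(u·y)·cos(y) > 0. -/
theorem mul_sin_cos_pos (y u : ℝ) (hy0 : 0 < y) (hy : y < Real.pi / 3)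
    (hu0 : 0 < u) (hu1 : u < 1) :
    u * Real.sin y * Real.cos (u * y) - Real.sin (u * y) * Real.cos y > 0 := by
  have hd : ∀ x : ℝ, HasDerivAt
      (fun x : ℝ => u * Real.sin x * Real.cos (u * x) - Real.sin (u * x) * Real.cos x)
      ((1 - u ^ 2) * (Real.sin x * Real.sin (u * x))) x := by
    intro x
    have h1 : HasDerivAt (fun x : ℝ => u * x) u x := by
      simpa using (hasDerivAt_id x).const_mul u
    have h2 := (((Real.hasDerivAt_sin x).const_mul u).mul h1.cos).sub
      (h1.sin.mul (Real.hasDerivAt_cos x))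
    refine h2.congr_deriv ?_
    ring
  have hm : StrictMonoOn
      (fun x : ℝ => u * Real.sin x * Real.cos (u * x) - Real.sin (u * x) * Real.cos x)
      (Set.Icc 0 y) := by
    apply strictMonoOn_of_deriv_pos (convex_Icc 0 y)
    · exact fun x _ => (hd x).continuousAt.continuousWithinAt
    · intro x hx
      rw [interior_Icc] at hx
      obtain ⟨hx0, hxy⟩ := hx
      rw [(hd x).deriv]
      have hpi := Real.pi_pos
      have hux : u * x < x := by nlinarith
      have s1 : 0 < Real.sin x := Real.sin_pos_of_pos_of_lt_pi hx0 (by linarith)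
      have s2 : 0 < Real.sin (u * x) :=
        Real.sin_pos_of_pos_of_lt_pi (mul_pos hu0 hx0) (by linarith)
      have s3 : 0 < 1 - u ^ 2 := by nlinarith
      positivity
  have h := hm (Set.left_mem_Icc.2 hy0.le) (Set.right_mem_Icc.2 hy0.le) hy0
  simpa using h
end

section
/- For all real numbers y and u with 0 < y < π/3 and 0 < u < 1, one has u·(cos(y)·cos(u·y) − 1) + sin(y)·sin(u·y) > 0. -/
theorem cos_cos_sin_sin_pos (y u : ℝ) (hy0 : 0 < y) (hy : y < Real.pi / 3)
    (hu0 : 0 < u) (hu1 : u < 1) :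
    u * (Real.cos y * Real.cos (u * y) - 1) + Real.sin y * Real.sin (u * y) > 0 := by
  have hd : ∀ x : ℝ, HasDerivAt
      (fun x : ℝ => u * (Real.cos x * Real.cos (u * x) - 1) + Real.sin x * Real.sin (u * x))
      ((1 - u ^ 2) * (Real.cos x * Real.sin (u * x))) x := by
    intro x
    have hl : HasDerivAt (fun x : ℝ => u * x) u x := by
      simpa using (hasDerivAt_id x).const_mul u
    have h := ((((Real.hasDerivAt_cos x).mul hl.cos).sub_const 1).const_mul u).add
      ((Real.hasDerivAt_sin x).mul hl.sin)
    refine h.congr_deriv ?_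
    ring
  have hm : StrictMonoOn
      (fun x : ℝ => u * (Real.cos x * Real.cos (u * x) - 1) + Real.sin x * Real.sin (u * x))
      (Set.Icc 0 (Real.pi / 3)) := by
    apply strictMonoOn_of_deriv_pos (convex_Icc _ _)
    · exact fun x _ => (hd x).continuousAt.continuousWithinAt
    · intro x hx
      rw [interior_Icc] at hx
      obtain ⟨hx0, hx1⟩ := hx
      have hpi := Real.pi_pos
      rw [(hd x).deriv]
      have h1 : 0 < Real.cos x := Real.cos_pos_of_mem_Ioo ⟨by linarith, by linarith⟩
      have h2 : 0 < Real.sin (u * x) :=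
        Real.sin_pos_of_pos_of_lt_pi (by positivity) (by nlinarith)
      have h3 : 0 < 1 - u ^ 2 := by nlinarith
      positivity
  have h := hm (a := 0) (b := y) ⟨le_refl _, by linarith⟩ ⟨hy0.le, hy.le⟩ hy0
  simpa using h
end

section
/- For every nonzero complex number a with |Im(a)| < π, the real part of a·sinh(a)/(cosh(a) − 1) is positive. -/
theorem re_mul_sinh_div_cosh_sub_one_pos (a : ℂ) (ha : a ≠ 0)
    (h : |a.im| < Real.pi) :
    0 < (a * Complex.sinh a / (Complex.cosh a - 1)).re := by
  obtain ⟨x, y⟩ := a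
  simp only at h
  have e : (⟨x, y⟩ : ℂ) = x + y * Complex.I := by
    apply Complex.ext <;> simp
  have hs : Complex.sinh ⟨x, y⟩ = ⟨Real.sinh x * Real.cos y, Real.cosh x * Real.sin y⟩ := by
    rw [e, Complex.sinh_add, Complex.sinh_mul_I, Complex.cosh_mul_I, ← Complex.ofReal_sinh,
      ← Complex.ofReal_cosh, ← Complex.ofReal_sin, ← Complex.ofReal_cos]
    apply Complex.ext <;> simp [-Complex.ofReal_sinh, -Complex.ofReal_cosh, -Complex.ofReal_sin,
      -Complex.ofReal_cos]
  have hc : Complex.cosh ⟨x, y⟩ = ⟨Real.cosh x * Real.cos y, Real.sinh x * Real.sin y⟩ := by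
    rw [e, Complex.cosh_add, Complex.sinh_mul_I, Complex.cosh_mul_I, ← Complex.ofReal_sinh,
      ← Complex.ofReal_cosh, ← Complex.ofReal_sin, ← Complex.ofReal_cos]
    apply Complex.ext <;> simp [-Complex.ofReal_sinh, -Complex.ofReal_cosh, -Complex.ofReal_sin,
      -Complex.ofReal_cos]
  have h1 := Real.cosh_sq x
  have h2 := Real.sin_sq_add_cos_sq y
  have hxs : 0 ≤ x * Real.sinh x := by
    rcases le_total 0 x with hx | hx
    · exact mul_nonneg hx (Real.sinh_nonneg_iff.2 hx)
    · exact mul_nonneg_of_nonpos_of_nonpos hx (Real.sinh_nonpos_iff.2 hx)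
  have hys' : y ≠ 0 → 0 < y * Real.sin y := by
    intro hy
    rw [abs_lt] at h
    rcases lt_or_gt_of_ne hy with hy | hy
    · exact mul_pos_of_neg_of_neg hy (Real.sin_neg_of_neg_of_neg_pi_lt hy h.1)
    · exact mul_pos hy (Real.sin_pos_of_pos_of_lt_pi hy h.2)
  have key : 0 < x * Real.sinh x + y * Real.sin y ∧ 0 < Real.cosh x - Real.cos y := by
    by_cases hy : y = 0
    · have hx : x ≠ 0 := by
        rintro rfl
        exact ha (by subst hy; rfl)
      subst hy
      have := Real.one_lt_cosh.2 hx
      have h3 : x * Real.sinh x ≠ 0 := mul_ne_zero hx (by simpa using hx)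
      have := lt_of_le_of_ne hxs h3.symm
      constructor <;> simp <;> assumption
    · have h3 := hys' hy
      refine ⟨by linarith, ?_⟩
      have h4 : Real.sin y ≠ 0 := by
        intro h0; simp [h0] at h3
      have h5 : 0 < Real.sin y ^ 2 := by positivity
      have := Real.one_le_cosh x
      nlinarith [Real.cos_le_one y]
  obtain ⟨k1, k2⟩ := key
  rw [hs, hc, Complex.div_re, ← add_div]
  have hn : Complex.normSq ((⟨Real.cosh x * Real.cos y, Real.sinh x * Real.sin y⟩ : ℂ) - 1)
      = (Real.cosh x - Real.cos y) ^ 2 := by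
    simp only [Complex.normSq_apply, Complex.sub_re, Complex.sub_im, Complex.one_re,
      Complex.one_im]
    grind
  rw [hn]
  apply div_pos _ (by positivity)
  have := mul_pos k1 k2
  simp only [Complex.mul_re, Complex.mul_im, Complex.sub_re, Complex.sub_im, Complex.one_re,
      Complex.one_im]
  convert this using 1
  grind
end

section
/- For all real numbers x and y with (x, y) ≠ (0, 0) and |y| < π/3, one has (x² − y²)·(cos(y)² + sinh(x)² − cos(y)·cosh(x)) + 2·x·y·sin(y)·sinh(x) > 0. -/
theorem f_alg (a b u v T : ℝ) (ha0 : 0 < a) (hab : a < b) (hb : b < 1.1025)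
    (hu0 : a / 2 ≤ u) (hue : u ≤ a / 2 + (a / 2) ^ 2) (hv0 : 0 ≤ v) (hv2 : v < 1 / 2)
    (hT : 1.2 * (a * b) ≤ T) :
    (a - b) * (u - v + u ^ 2 + u * v + v ^ 2) + T > 0 := by
  have hu1 : u ≤ 0.86 := by nlinarith
  have k1 : (b - a) * u ≤ a * b / 2 := by
    have h1 := mul_le_mul_of_nonneg_left hue (sub_nonneg.2 hab.le)
    have h2 := mul_pos (mul_pos ha0 ha0) (show 0 < 2 - b + a by linarith)
    linarith
  have k4 : 0 < a * b := mul_pos ha0 (by linarith)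
  have k2 : (b - a) * u * (1 + u + v) ≤ (a * b / 2) * 2.36 :=
    mul_le_mul k1 (by linarith) (by linarith) (by linarith)
  have k3 : 0 ≤ (b - a) * (v * (1 - v)) :=
    mul_nonneg (by linarith) (mul_nonneg hv0 (by linarith))
  linarith

theorem f_aux (x y : ℝ) (hx : 0 ≤ x) (hy0 : 0 ≤ y) (hxy : 0 < x ∨ 0 < y)
    (hy : y < Real.pi / 3) :
    (x ^ 2 - y ^ 2) *
        (Real.cos y ^ 2 + Real.sinh x ^ 2 - Real.cos y * Real.cosh x) +
      2 * x * y * Real.sin y * Real.sinh x > 0 := by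
  have hpi := Real.pi_lt_d2
  have hpi3 := Real.pi_gt_three
  have hc : 1 / 2 < Real.cos y := by
    rw [← Real.cos_pi_div_three]
    exact Real.cos_lt_cos_of_nonneg_of_le_pi hy0 (by linarith) hy
  have hv := Real.one_sub_sq_div_two_le_cos (x := y)
  have hc1 := Real.cos_le_one y
  have hSx : x ≤ Real.sinh x := Real.self_le_sinh_iff.2 hx
  have hs : 0.6 * y ≤ Real.sin y := by
    have h := Real.mul_le_sin hy0 (by linarith)
    have h2 : (0.6 : ℝ) ≤ 2 / Real.pi := by
      rw [le_div_iff₀ Real.pi_pos]; linarith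
    nlinarith
  have hsq := Real.cosh_sq x
  have hC : 1 + x ^ 2 / 2 ≤ Real.cosh x := by
    have h1 : Real.cosh x = 1 + 2 * Real.sinh (x / 2) ^ 2 := by
      have := Real.cosh_two_mul (x / 2)
      have h3 := Real.cosh_sq (x / 2)
      rw [show 2 * (x / 2) = x by ring] at this
      linarith
    have h2 : x / 2 ≤ Real.sinh (x / 2) := Real.self_le_sinh_iff.2 (by linarith)
    nlinarith
  have hsS : 0.6 * y * x ≤ Real.sin y * Real.sinh x :=
    mul_le_mul hs hSx hx (by linarith)
  have hT : 1.2 * (x ^ 2 * y ^ 2) ≤ 2 * x * y * Real.sin y * Real.sinh x := by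
    nlinarith [mul_le_mul_of_nonneg_left hsS (mul_nonneg hx hy0)]
  generalize hTT : 2 * x * y * Real.sin y * Real.sinh x = T at *
  obtain ⟨u, hu⟩ : ∃ u, u = Real.cosh x - 1 := ⟨_, rfl⟩
  obtain ⟨v, hvv⟩ : ∃ v, v = 1 - Real.cos y := ⟨_, rfl⟩
  have hQ : Real.cos y ^ 2 + Real.sinh x ^ 2 - Real.cos y * Real.cosh x
      = u - v + u ^ 2 + u * v + v ^ 2 := by
    rw [hu, hvv]; nlinarith
  rw [hQ]
  have hu0 : x ^ 2 / 2 ≤ u := by linarith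
  have hv0 : 0 ≤ v := by linarith
  have hv1 : v ≤ y ^ 2 / 2 := by linarith
  have hv2 : v < 1 / 2 := by linarith
  rcases le_or_gt y x with h | h
  · have hx0 : 0 < x := by rcases hxy with h1 | h1 <;> linarith
    have hab : y ^ 2 ≤ x ^ 2 := by gcongr
    have hup : 0 < u := by nlinarith [pow_pos hx0 2]
    have hQ0 : 0 < u - v + u ^ 2 + u * v + v ^ 2 := by
      nlinarith [pow_pos hup 2, mul_nonneg hup.le hv0, sq_nonneg v]
    rcases hy0.eq_or_lt with h0 | h0
    · have : 0 < (x ^ 2 - y ^ 2) * (u - v + u ^ 2 + u * v + v ^ 2) := by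
        apply mul_pos _ hQ0
        rw [← h0]; nlinarith
      have : 0 ≤ x ^ 2 * y ^ 2 := by positivity
      linarith
    · have : 0 ≤ (x ^ 2 - y ^ 2) * (u - v + u ^ 2 + u * v + v ^ 2) :=
        mul_nonneg (by linarith) hQ0.le
      have : 0 < x ^ 2 * y ^ 2 := by positivity
      linarith
  · have hy1 : 0 < y := by linarith
    have hb : y ^ 2 < 1.1025 := by nlinarith
    have hab : x ^ 2 < y ^ 2 := by gcongr
    rcases hx.eq_or_lt with h0 | h0
    · have hu1 : u = 0 := by rw [hu, ← h0]; simp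
      have hvp : 0 < v := by
        have : Real.cos y < Real.cos 0 :=
          Real.cos_lt_cos_of_nonneg_of_le_pi le_rfl (by linarith) hy1
        rw [Real.cos_zero] at this
        linarith
      have : 0 < y ^ 2 * (v * (1 - v)) := by
        have : 0 < 1 - v := by linarith
        positivity
      rw [← h0] at hT ⊢
      rw [hu1]
      nlinarith
    · have hue : u ≤ x ^ 2 / 2 + (x ^ 2 / 2) ^ 2 := by
        have h1 := Real.cosh_le_exp_half_sq x
        have h2 := Real.abs_exp_sub_one_sub_id_le (x := x ^ 2 / 2)
          (by rw [abs_of_nonneg (by positivity)]; linarith)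
        have h3 := (abs_le.1 h2).2
        linarith
      exact f_alg (x ^ 2) (y ^ 2) u v T (by positivity) hab hb hu0 hue hv0 hv2 hT

theorem f_xy_pos (x y : ℝ) (hxy : (x, y) ≠ (0, 0)) (hy : |y| < Real.pi / 3) :
    (x ^ 2 - y ^ 2) *
        (Real.cos y ^ 2 + Real.sinh x ^ 2 - Real.cos y * Real.cosh x) +
      2 * x * y * Real.sin y * Real.sinh x > 0 := by
  have h0 : 0 < |x| ∨ 0 < |y| := by
    by_contra! h
    apply hxy
    rw [abs_nonpos_iff.1 h.1, abs_nonpos_iff.1 h.2]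
  have h := f_aux |x| |y| (abs_nonneg x) (abs_nonneg y) h0 hy
  rcases abs_cases x with ⟨h1, _⟩ | ⟨h1, _⟩ <;> rcases abs_cases y with ⟨h2, _⟩ | ⟨h2, _⟩ <;>
    rw [h1, h2] at h <;>
    (try simp only [Real.cos_neg, Real.sin_neg, Real.sinh_neg, Real.cosh_neg] at h) <;>
    linarith
end

section
/- For every real number x with 0 < x < π, one has cosh(x)·cos(x) < 1. -/
theorem cosh_mul_cos_lt_one (x : ℝ) (hx0 : 0 < x) (hx : x < Real.pi) :
    Real.cosh x * Real.cos x < 1 := by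
  have hg' : ∀ y : ℝ, HasDerivAt (fun y => Real.sinh y * Real.cos y - Real.cosh y * Real.sin y)
      (-2 * (Real.sinh y * Real.sin y)) y := by
    intro y
    have h := ((Real.hasDerivAt_sinh y).mul (Real.hasDerivAt_cos y)).sub
      ((Real.hasDerivAt_cosh y).mul (Real.hasDerivAt_sin y))
    exact h.congr_deriv (by ring)
  have hf' : ∀ y : ℝ, HasDerivAt (fun y => Real.cosh y * Real.cos y)
      (Real.sinh y * Real.cos y - Real.cosh y * Real.sin y) y := by
    intro y
    have h := (Real.hasDerivAt_cosh y).mul (Real.hasDerivAt_cos y)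
    exact h.congr_deriv (by ring)
  have hg : StrictAntiOn (fun y => Real.sinh y * Real.cos y - Real.cosh y * Real.sin y)
      (Set.Icc 0 Real.pi) := by
    apply strictAntiOn_of_deriv_neg (convex_Icc _ _)
    · exact fun y _ => (hg' y).continuousAt.continuousWithinAt
    · intro y hy
      rw [interior_Icc] at hy
      rw [(hg' y).deriv]
      have := mul_pos (Real.sinh_pos_iff.2 hy.1) (Real.sin_pos_of_mem_Ioo hy)
      linarith
  have h0 : (0 : ℝ) ∈ Set.Icc 0 Real.pi := ⟨le_rfl, Real.pi_pos.le⟩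
  have hf : StrictAntiOn (fun y => Real.cosh y * Real.cos y) (Set.Icc 0 Real.pi) := by
    apply strictAntiOn_of_deriv_neg (convex_Icc _ _)
    · exact fun y _ => (hf' y).continuousAt.continuousWithinAt
    · intro y hy
      rw [interior_Icc] at hy
      rw [(hf' y).deriv]
      simpa using hg h0 ⟨hy.1.le, hy.2.le⟩ hy.1
  simpa using hf h0 ⟨hx0.le, hx.le⟩ hx0
end

section
/- For every real number y with 0 < y < π/3, one has −2·y² + 2·(cos(y)² − cos(y)) + 4·y·sin(y) > 0. -/
theorem g_y_pos (y : ℝ) (hy0 : 0 < y) (hy : y < Real.pi / 3) :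
    -2 * y ^ 2 + 2 * (Real.cos y ^ 2 - Real.cos y) + 4 * y * Real.sin y > 0 := by
  have h1 := Real.one_sub_sq_div_two_le_cos (x := y)
  have h2 : y - y ^ 3 / 6 < Real.sin y := Real.sin_gt_sub_cube hy0
  have h3 : y < 1.05 := by linarith [Real.pi_lt_d2]
  have h4 : y * (y - y ^ 3 / 6) < y * Real.sin y := mul_lt_mul_of_pos_left h2 hy0
  have h5 : y ^ 2 < 3 / 2 := by nlinarith
  have h6 : 0 < y ^ 2 * (3 / 2 - y ^ 2) := mul_pos (by positivity) (by linarith)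
  have h7 := sq_nonneg (1 - Real.cos y)
  nlinarith
end
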